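/- arXiv:1308.2499 — 2 statements merged into one kernel-verified Lean document; each statement's English description precedes it below -/
import Mathlib

section
/- Let f ∈ L¹((ℝ/ℤ)³) be symmetric in all components, i.e. f(u_{σ(1)},u_{σ(2)},u_{σ(3)}) = f(u₁,u₂,u₃) for every permutation σ of {1,2,3}. Then ∭_{(ℝ/ℤ)³} f(u₁,u₂,u₃) du₁ du₂ du₃ = 6 ∫_{ℝ/ℤ} ∬_D f(u, u+v, u+w) dw dv du. -/
open MeasureTheory Set
open scoped ENNReal

noncomputable section

/-- The range of integration `D ⊆ (-1/2,0) × (0,1/2)` given by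
`w ≤ 1 + 2v` and `v ≥ -1 + 2w`. -/
def domainD : Set (ℝ × ℝ) :=
  {x | x.1 ∈ Set.Ioo (-(1/2) : ℝ) 0 ∧ x.2 ∈ Set.Ioo (0 : ℝ) (1/2) ∧
    x.2 ≤ 1 + 2 * x.1 ∧ -1 + 2 * x.2 ≤ x.1}

/-!
On the circle, writing `u₂ = u + v` and `u₃ = u + w` turns the triple integral of `f` into the
integral over offsets `(v, w)` of the correlation `∫ f(u, u + v, u + w) du`. Up to a null set the
offsets form the square `(-1, 0] × (0, 1]`. Exchanging the last two arguments of `f` exchanges the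
two triangles into which the diagonal `w = 1 + v` cuts the square. On the triangle `w < 1 + v`
the points `u + v, u, u + w` cut the circle into arcs of lengths `-v`, `w` and `1 + v - w`, which
are permuted cyclically by taking another of the three points as base point. The set `D` consists
of the offsets for which the third arc is a longest one, so its three rotations tile the triangle.
-/

section MeasurePreserving

variable {α β E : Type*} [MeasurableSpace α] [MeasurableSpace β]
  [NormedAddCommGroup E] [NormedSpace ℝ E]

lemma integral_comp_of_measurePreserving {μ : Measure α} {ν : Measure β} {e : α → β}
    (he : MeasurePreserving e μ ν) {g : β → E} (hg : AEStronglyMeasurable g ν) :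
    ∫ x, g (e x) ∂μ = ∫ y, g y ∂ν := by
  rw [← he.map_eq] at hg ⊢
  exact (integral_map he.aemeasurable hg).symm

lemma setIntegral_eq_nsmul_of_ae_eq_iUnion_preimage_iterate {μ : Measure α} {e : α → α}
    (he : MeasurePreserving e μ μ) {n : ℕ} {s t : Set α} (ht : MeasurableSet t)
    (hs : s =ᵐ[μ] ⋃ i : Fin n, e^[i] ⁻¹' t)
    (hdisj : Pairwise (Function.onFun (AEDisjoint μ) fun i : Fin n => e^[i] ⁻¹' t))
    {g : α → E} (hg : g ∘ e = g) (hint : IntegrableOn g t μ) :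
    ∫ x in s, g x ∂μ = n • ∫ x in t, g x ∂μ := by
  have g_iterate (k : ℕ) : g ∘ e^[k] = g := by
    induction k with
    | zero => rfl
    | succ k ih => rw [Function.iterate_succ, ← Function.comp_assoc, ih, hg]
  have he_restrict (k : ℕ) := (he.iterate k).restrict_preimage ht
  have integral_piece (k : ℕ) : ∫ x in e^[k] ⁻¹' t, g x ∂μ = ∫ x in t, g x ∂μ := by
    rw [← integral_comp_of_measurePreserving (he_restrict k) hint.aestronglyMeasurable]
    exact congrArg (fun h : α → E => ∫ x in e^[k] ⁻¹' t, h x ∂μ) (g_iterate k).symm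
  have integrable_piece (k : ℕ) : IntegrableOn g (e^[k] ⁻¹' t) μ := by
    rw [← g_iterate k]
    exact (he_restrict k).integrable_comp_of_integrable hint
  rw [setIntegral_congr_set hs,
    integral_iUnion_ae (fun i : Fin n => ((he.iterate i).measurable ht).nullMeasurableSet) hdisj
      (integrableOn_finite_iUnion.2 fun i : Fin n => integrable_piece i), tsum_fintype]
  simp only [integral_piece, Finset.sum_const, Finset.card_univ, Fintype.card_fin]

lemma ae_snd_ne_of_measurable [MeasurableEq β] {μ : Measure α} {ν : Measure β} [SFinite ν]
    [NullSingletonClass ν] {h : α → β} (hh : Measurable h) : ∀ᵐ x ∂μ.prod ν, x.2 ≠ h x.1 := by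
  have hgraph : MeasurableSet {x : α × β | x.2 = h x.1} :=
    measurableSet_eq_fun measurable_snd (hh.comp measurable_fst)
  refine Measure.ae_prod_iff_ae_ae hgraph.compl |>.2 (ae_of_all _ fun a => ?_)
  exact ν.ae_ne (h a)

end MeasurePreserving

section Offsets

/-- The offsets `(v, w)` for which `u + v < u < u + w < u + v + 1`, that is, for which the three
points go around the circle `ℝ/ℤ` once in this order. -/
def orderedTriangle : Set (ℝ × ℝ) :=
  {x | x.1 < 0 ∧ 0 < x.2 ∧ x.2 < 1 + x.1}

/-- The change of offsets when `u + w` replaces `u` as base point. It sends the arc lengths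
`(-v, w, 1 + v - w)` to `(w, 1 + v - w, -v)`. -/
def rotateOffsets (x : ℝ × ℝ) : ℝ × ℝ := (-x.2, 1 + x.1 - x.2)

/-- The exchange of the two offsets, translated by `(-1, 1) ∈ ℤ²` so that it preserves the square
`(-1, 0) × (0, 1)`. -/
def exchangeOffsets (x : ℝ × ℝ) : ℝ × ℝ := (x.2 - 1, x.1 + 1)

lemma measurePreserving_rotateOffsets : MeasurePreserving rotateOffsets := by
  have hskew : MeasurePreserving (fun x : ℝ × ℝ => (-x.1, x.2 + (1 - x.1))) :=
    (Measure.measurePreserving_neg volume).skew_product (g := fun w v => v + (1 - w))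
      (by fun_prop) (ae_of_all _ fun w => (measurePreserving_add_right volume (1 - w)).map_eq)
  have rotate_eq : rotateOffsets = (fun x : ℝ × ℝ => (-x.1, x.2 + (1 - x.1))) ∘ Prod.swap := by
    ext x
    · rfl
    · simp only [rotateOffsets, Function.comp_apply, Prod.fst_swap, Prod.snd_swap]
      ring
  rw [rotate_eq]
  exact hskew.comp Measure.measurePreserving_swap

lemma measurePreserving_exchangeOffsets : MeasurePreserving exchangeOffsets :=
  ((measurePreserving_sub_right volume 1).prod (measurePreserving_add_right volume 1)).comp
    Measure.measurePreserving_swap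

lemma mem_domainD_iff {x : ℝ × ℝ} :
    x ∈ domainD ↔ x.1 < 0 ∧ 0 < x.2 ∧ -x.1 ≤ 1 + x.1 - x.2 ∧ x.2 ≤ 1 + x.1 - x.2 := by
  simp only [domainD, mem_ofPred_eq, mem_Ioo]
  grind

lemma measurableSet_domainD : MeasurableSet domainD := by
  unfold domainD
  measurability

lemma measurableSet_orderedTriangle : MeasurableSet orderedTriangle := by
  unfold orderedTriangle
  measurability

lemma orderedTriangle_subset_square : orderedTriangle ⊆ Ioc (-1) 0 ×ˢ Ioc 0 1 := by
  rintro x ⟨hv, hw, hvw⟩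
  constructor <;> constructor <;> linarith

lemma domainD_subset_orderedTriangle : domainD ⊆ orderedTriangle := by
  intro x hx
  obtain ⟨hv, hw, hfirst, -⟩ := mem_domainD_iff.1 hx
  exact ⟨hv, hw, by linarith⟩

lemma orderedTriangle_eq_iUnion_preimage_rotateOffsets :
    orderedTriangle = ⋃ i : Fin 3, rotateOffsets^[i] ⁻¹' domainD := by
  ext x
  have mem_union : x ∈ ⋃ i : Fin 3, rotateOffsets^[i] ⁻¹' domainD ↔
      x ∈ domainD ∨ rotateOffsets x ∈ domainD ∨ rotateOffsets (rotateOffsets x) ∈ domainD := by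
    simp [Fin.exists_fin_succ]
  rw [mem_union]
  simp only [mem_domainD_iff, rotateOffsets, orderedTriangle, mem_ofPred_eq]
  grind

lemma pairwise_aedisjoint_preimage_rotateOffsets_domainD :
    Pairwise (Function.onFun (AEDisjoint volume)
      fun i : Fin 3 => rotateOffsets^[i] ⁻¹' domainD) := by
  have first_ne_second : ∀ᵐ x : ℝ × ℝ, x.2 ≠ -x.1 := ae_snd_ne_of_measurable measurable_neg
  have first_ne_third : ∀ᵐ x : ℝ × ℝ, x.2 ≠ 1 + 2 * x.1 :=
    ae_snd_ne_of_measurable (h := fun v => 1 + 2 * v) (by fun_prop)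
  have second_ne_third : ∀ᵐ x : ℝ × ℝ, x.2 ≠ (1 + x.1) / 2 :=
    ae_snd_ne_of_measurable (h := fun v => (1 + v) / 2) (by fun_prop)
  intro i j hij
  refine measure_eq_zero_iff_ae_notMem.2 ?_
  filter_upwards [first_ne_second, first_ne_third, second_ne_third] with x h₁₂ h₁₃ h₂₃ ⟨hi, hj⟩
  fin_cases i <;> fin_cases j <;>
    simp only [mem_preimage, Function.iterate_succ, Function.iterate_zero, Function.comp_apply,
      id_eq, mem_domainD_iff, rotateOffsets] at hi hj <;>
    grind

lemma square_ae_eq_iUnion_preimage_exchangeOffsets :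
    (Ioc (-1) 0 ×ˢ Ioc 0 1 : Set (ℝ × ℝ)) =ᵐ[volume]
      ⋃ i : Fin 2, exchangeOffsets^[i] ⁻¹' orderedTriangle := by
  have open_square : (Ioc (-1) 0 ×ˢ Ioc 0 1 : Set (ℝ × ℝ)) =ᵐ[volume] Ioo (-1) 0 ×ˢ Ioo 0 1 :=
    Measure.set_prod_ae_eq Ioo_ae_eq_Ioc.symm Ioo_ae_eq_Ioc.symm
  have off_diagonal : ∀ᵐ x : ℝ × ℝ, x.2 ≠ 1 + x.1 := ae_snd_ne_of_measurable (by fun_prop)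
  refine open_square.trans (Filter.eventuallyEq_set.2 ?_)
  filter_upwards [off_diagonal] with x hx
  have mem_union : x ∈ ⋃ i : Fin 2, exchangeOffsets^[i] ⁻¹' orderedTriangle ↔
      x ∈ orderedTriangle ∨ exchangeOffsets x ∈ orderedTriangle := by
    simp [Fin.exists_fin_succ]
  rw [mem_union]
  simp only [exchangeOffsets, orderedTriangle, mem_ofPred_eq, mem_prod, mem_Ioo]
  grind

lemma pairwise_disjoint_preimage_exchangeOffsets_orderedTriangle :
    Pairwise (Function.onFun Disjoint
      fun i : Fin 2 => exchangeOffsets^[i] ⁻¹' orderedTriangle) := by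
  intro i j hij
  refine disjoint_left.2 fun x hi hj => ?_
  fin_cases i <;> fin_cases j <;>
    simp only [mem_preimage, Function.iterate_succ, Function.iterate_zero, Function.comp_apply,
      id_eq, exchangeOffsets, orderedTriangle, mem_ofPred_eq] at hi hj <;>
    grind

variable {E : Type*} [NormedAddCommGroup E] [NormedSpace ℝ E]

lemma setIntegral_square_eq_six_nsmul_setIntegral_domainD {g : ℝ × ℝ → E}
    (hrotate : g ∘ rotateOffsets = g) (hexchange : g ∘ exchangeOffsets = g)
    (hint : IntegrableOn g (Ioc (-1) 0 ×ˢ Ioc 0 1)) :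
    ∫ x in Ioc (-1) 0 ×ˢ Ioc 0 1, g x = 6 • ∫ x in domainD, g x := by
  have hint_triangle := hint.mono_set orderedTriangle_subset_square
  calc ∫ x in Ioc (-1) 0 ×ˢ Ioc 0 1, g x
      = 2 • ∫ x in orderedTriangle, g x :=
        setIntegral_eq_nsmul_of_ae_eq_iUnion_preimage_iterate measurePreserving_exchangeOffsets
          measurableSet_orderedTriangle square_ae_eq_iUnion_preimage_exchangeOffsets
          (pairwise_disjoint_preimage_exchangeOffsets_orderedTriangle.mono
            fun _ _ h => h.aedisjoint) hexchange hint_triangle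
    _ = 2 • 3 • ∫ x in domainD, g x := by
        rw [setIntegral_eq_nsmul_of_ae_eq_iUnion_preimage_iterate measurePreserving_rotateOffsets
          measurableSet_domainD orderedTriangle_eq_iUnion_preimage_rotateOffsets.eventuallyEq
          pairwise_aedisjoint_preimage_rotateOffsets_domainD hrotate
          (hint_triangle.mono_set domainD_subset_orderedTriangle)]
    _ = 6 • ∫ x in domainD, g x := smul_smul 2 3 _

end Offsets

section TripleCorrelation

variable {G E : Type*} [AddCommGroup G] [MeasurableSpace G] [NormedAddCommGroup E]
  {μ : Measure G} {F : G → G → G → E}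

lemma measurePreserving_add_diagonal [MeasurableAdd₂ G] [SFinite μ] [μ.IsAddLeftInvariant] :
    MeasurePreserving (fun x : G × G × G => (x.1, x.1 + x.2.1, x.1 + x.2.2))
      (μ.prod (μ.prod μ)) (μ.prod (μ.prod μ)) := by
  have hadd (u : G) := measurePreserving_add_left μ u
  exact (MeasurePreserving.id μ).skew_product (g := fun u (p : G × G) => (u + p.1, u + p.2))
    (by fun_prop) (ae_of_all _ fun u => ((hadd u).prod (hadd u)).map_eq)

lemma integrable_comp_add_diagonal [MeasurableAdd₂ G] [SFinite μ] [μ.IsAddLeftInvariant]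
    (hF : Integrable (fun x : G × G × G => F x.1 x.2.1 x.2.2) (μ.prod (μ.prod μ))) :
    Integrable (fun x : G × G × G => F x.1 (x.1 + x.2.1) (x.1 + x.2.2)) (μ.prod (μ.prod μ)) :=
  measurePreserving_add_diagonal.integrable_comp_of_integrable hF

variable [NormedSpace ℝ E]

/-- The triple correlation of `F` as a function of the offsets of the second and third argument
from the first, which is integrated out. -/
def tripleCorrelation (μ : Measure G) (F : G → G → G → E) (p : G × G) : E :=
  ∫ u, F u (u + p.1) (u + p.2) ∂μ

lemma tripleCorrelation_swap (hsymm₂₃ : ∀ x y z, F x y z = F x z y) (x y : G) :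
    tripleCorrelation μ F (y, x) = tripleCorrelation μ F (x, y) :=
  integral_congr_ae (ae_of_all _ fun _ => hsymm₂₃ _ _ _)

lemma tripleCorrelation_rotate [MeasurableAdd G] [μ.IsAddLeftInvariant]
    (hcycle : ∀ x y z, F x y z = F z x y) (x y : G) :
    tripleCorrelation μ F (-y, x - y) = tripleCorrelation μ F (x, y) := by
  unfold tripleCorrelation
  rw [← integral_add_left_eq_self _ y]
  refine integral_congr_ae (ae_of_all _ fun u => ?_)
  dsimp only
  rw [hcycle u (u + x) (u + y)]
  congr 1 <;> abel

variable [MeasurableAdd₂ G] [SFinite μ] [μ.IsAddLeftInvariant]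

lemma integrable_tripleCorrelation
    (hF : Integrable (fun x : G × G × G => F x.1 x.2.1 x.2.2) (μ.prod (μ.prod μ))) :
    Integrable (tripleCorrelation μ F) (μ.prod μ) :=
  (integrable_comp_add_diagonal hF).integral_prod_right

lemma integral_tripleCorrelation
    (hF : Integrable (fun x : G × G × G => F x.1 x.2.1 x.2.2) (μ.prod (μ.prod μ))) :
    ∫ p, tripleCorrelation μ F p ∂μ.prod μ = ∫ x, F x.1 x.2.1 x.2.2 ∂μ.prod (μ.prod μ) := by
  rw [← integral_comp_of_measurePreserving measurePreserving_add_diagonal hF.aestronglyMeasurable]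
  exact (integral_prod_symm _ (integrable_comp_add_diagonal hF)).symm

end TripleCorrelation

section Circle

variable {E : Type*} [NormedAddCommGroup E] [NormedSpace ℝ E]

lemma measurePreserving_coe_offsets :
    MeasurePreserving (fun x : ℝ × ℝ => ((x.1, x.2) : UnitAddCircle × UnitAddCircle))
      (volume.restrict (Ioc (-1) 0 ×ˢ Ioc 0 1)) := by
  have h := (UnitAddCircle.measurePreserving_mk (-1)).prod (UnitAddCircle.measurePreserving_mk 0)
  rw [Measure.prod_restrict, neg_add_cancel, zero_add] at h
  exact h

variable {F : UnitAddCircle → UnitAddCircle → UnitAddCircle → E}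

lemma integral_setIntegral_domainD_eq_setIntegral_tripleCorrelation
    (hF : Integrable fun x : UnitAddCircle × UnitAddCircle × UnitAddCircle => F x.1 x.2.1 x.2.2) :
    ∫ u, ∫ x in domainD, F u (u + (x.1 : ℝ)) (u + (x.2 : ℝ)) =
      ∫ x in domainD, tripleCorrelation volume F (x.1, x.2) := by
  have hint : Integrable
      (fun x : UnitAddCircle × ℝ × ℝ => F x.1 (x.1 + (x.2.1 : ℝ)) (x.1 + (x.2.2 : ℝ)))
      (volume.prod (volume.restrict (Ioc (-1) 0 ×ˢ Ioc 0 1))) :=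
    ((MeasurePreserving.id volume).prod measurePreserving_coe_offsets).integrable_comp_of_integrable
      (integrable_comp_add_diagonal hF)
  have domainD_subset_square := domainD_subset_orderedTriangle.trans orderedTriangle_subset_square
  exact integral_integral_swap (hint.mono_measure
    (Measure.prod_mono le_rfl (Measure.restrict_mono domainD_subset_square le_rfl)))

theorem integral_unitAddCircle_eq_six_nsmul_integral_setIntegral_domainD
    (hsymm₁₂ : ∀ x y z, F x y z = F y x z) (hsymm₂₃ : ∀ x y z, F x y z = F x z y)
    (hF : Integrable fun x : UnitAddCircle × UnitAddCircle × UnitAddCircle => F x.1 x.2.1 x.2.2) :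
    ∫ x : UnitAddCircle × UnitAddCircle × UnitAddCircle, F x.1 x.2.1 x.2.2 =
      6 • ∫ u, ∫ x in domainD, F u (u + (x.1 : ℝ)) (u + (x.2 : ℝ)) := by
  have hcycle (x y z) : F x y z = F z x y := (hsymm₂₃ x y z).trans (hsymm₁₂ x z y)
  have hC := integrable_tripleCorrelation hF
  have hrotate : (fun x : ℝ × ℝ => tripleCorrelation volume F (x.1, x.2)) ∘ rotateOffsets =
      fun x : ℝ × ℝ => tripleCorrelation volume F (x.1, x.2) := by
    ext x
    simp [← tripleCorrelation_rotate hcycle x.1 x.2, rotateOffsets, AddCircle.coe_period (1 : ℝ)]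
  have hexchange : (fun x : ℝ × ℝ => tripleCorrelation volume F (x.1, x.2)) ∘ exchangeOffsets =
      fun x : ℝ × ℝ => tripleCorrelation volume F (x.1, x.2) := by
    ext x
    simp [← tripleCorrelation_swap hsymm₂₃ x.1 x.2, exchangeOffsets, AddCircle.coe_period (1 : ℝ)]
  calc ∫ x : UnitAddCircle × UnitAddCircle × UnitAddCircle, F x.1 x.2.1 x.2.2
      = ∫ p, tripleCorrelation volume F p := (integral_tripleCorrelation hF).symm
    _ = ∫ x in Ioc (-1 : ℝ) 0 ×ˢ Ioc (0 : ℝ) 1, tripleCorrelation volume F (x.1, x.2) :=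
        (integral_comp_of_measurePreserving measurePreserving_coe_offsets
          hC.aestronglyMeasurable).symm
    _ = 6 • ∫ x in domainD, tripleCorrelation volume F (x.1, x.2) :=
        setIntegral_square_eq_six_nsmul_setIntegral_domainD hrotate hexchange
          (measurePreserving_coe_offsets.integrable_comp_of_integrable hC)
    _ = 6 • ∫ u, ∫ x in domainD, F u (u + (x.1 : ℝ)) (u + (x.2 : ℝ)) := by
        rw [integral_setIntegral_domainD_eq_setIntegral_tripleCorrelation hF]

end Circle

section Representative

variable (T : ℝ) [Fact (0 < T)]

/-- The representative in `[0, T)` of a point of the circle `ℝ/Tℤ`. -/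
def circleRepresentative (x : AddCircle T) : ℝ := AddCircle.equivIco T 0 x

lemma measurableEmbedding_circleRepresentative : MeasurableEmbedding (circleRepresentative T) :=
  (MeasurableEmbedding.subtype_coe measurableSet_Ico).comp
    (AddCircle.measurableEquivIco T 0).measurableEmbedding

lemma measurePreserving_circleRepresentative :
    MeasurePreserving (circleRepresentative T) volume (volume.restrict (Ico 0 T)) := by
  have hmk : MeasurePreserving ((↑) : ℝ → AddCircle T) (volume.restrict (Ico 0 T)) := by
    rw [Measure.restrict_congr_set Ico_ae_eq_Ioc]
    simpa only [zero_add] using AddCircle.measurePreserving_mk T 0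
  have hmeas := (measurableEmbedding_circleRepresentative T).measurable
  have hleft : circleRepresentative T ∘ (↑) =ᵐ[volume.restrict (Ico 0 T)] id := by
    filter_upwards [ae_restrict_mem measurableSet_Ico] with x hx
    exact AddCircle.equivIco_coe_of_mem (by rwa [zero_add])
  refine ⟨hmeas, ?_⟩
  rw [← hmk.map_eq, Measure.map_map hmeas hmk.measurable, Measure.map_congr hleft, Measure.map_id]

variable {T}

lemma apply_circleRepresentative_of_periodic {β : Type*} {h : ℝ → β}
    (hh : Function.Periodic h T) (a : ℝ) :
    h (circleRepresentative T a) = h a := by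
  rw [← hh.lift_coe, ← hh.lift_coe a, circleRepresentative, AddCircle.coe_equivIco]

end Representative

theorem domain_decomposition_general {E : Type*} [NormedAddCommGroup E] [NormedSpace ℝ E]
    (f : ℝ → ℝ → ℝ → E)
    (hper₁ : ∀ u₂ u₃, Function.Periodic (fun u₁ => f u₁ u₂ u₃) 1)
    (hper₂ : ∀ u₁ u₃, Function.Periodic (fun u₂ => f u₁ u₂ u₃) 1)
    (hper₃ : ∀ u₁ u₂, Function.Periodic (fun u₃ => f u₁ u₂ u₃) 1)
    (hsymm₁₂ : ∀ u₁ u₂ u₃, f u₁ u₂ u₃ = f u₂ u₁ u₃)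
    (hsymm₂₃ : ∀ u₁ u₂ u₃, f u₁ u₂ u₃ = f u₁ u₃ u₂)
    (hint : IntegrableOn (fun x : ℝ × ℝ × ℝ => f x.1 x.2.1 x.2.2)
      (Ico 0 1 ×ˢ Ico 0 1 ×ˢ Ico 0 1)) :
    ∫ x in Ico (0:ℝ) 1 ×ˢ Ico (0:ℝ) 1 ×ˢ Ico (0:ℝ) 1, f x.1 x.2.1 x.2.2 =
      6 • ∫ u in Ico (0:ℝ) 1, ∫ x in domainD, f u (u + x.1) (u + x.2) := by
  let r : UnitAddCircle → ℝ := circleRepresentative 1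
  let F (x y z : UnitAddCircle) : E := f (r x) (r y) (r z)
  have F_coe (a b c : ℝ) : F a b c = f a b c := by
    dsimp only [F, r]
    rw [apply_circleRepresentative_of_periodic (hper₁ _ _),
      apply_circleRepresentative_of_periodic (hper₂ _ _),
      apply_circleRepresentative_of_periodic (hper₃ _ _)]
  have hr := measurePreserving_circleRepresentative 1
  have hr₃ : MeasurePreserving (Prod.map r (Prod.map r r)) volume
      (volume.restrict (Ico 0 1 ×ˢ Ico 0 1 ×ˢ Ico 0 1)) := by
    have h := hr.prod (hr.prod hr)
    rwa [Measure.prod_restrict, Measure.prod_restrict] at h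
  have hF := hr₃.integrable_comp_of_integrable hint
  calc ∫ x in Ico (0:ℝ) 1 ×ˢ Ico (0:ℝ) 1 ×ˢ Ico (0:ℝ) 1, f x.1 x.2.1 x.2.2
      = ∫ x : UnitAddCircle × UnitAddCircle × UnitAddCircle, F x.1 x.2.1 x.2.2 :=
        (integral_comp_of_measurePreserving hr₃ hint.aestronglyMeasurable).symm
    _ = 6 • ∫ u, ∫ x in domainD, F u (u + (x.1 : ℝ)) (u + (x.2 : ℝ)) :=
        integral_unitAddCircle_eq_six_nsmul_integral_setIntegral_domainD
          (fun _ _ _ => hsymm₁₂ _ _ _) (fun _ _ _ => hsymm₂₃ _ _ _) hF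
    _ = 6 • ∫ u in Ico (0:ℝ) 1, ∫ x in domainD, f u (u + x.1) (u + x.2) := by
        rw [← UnitAddCircle.integral_preimage 0, zero_add, integral_Ico_eq_integral_Ioc]
        simp only [← AddCircle.coe_add, F_coe]

/-- **Domain decomposition.** If `f ∈ L¹((ℝ/ℤ)³)` (modelled by a function that is
`1`-periodic in each variable and integrable on the fundamental domain `[0,1)³`)
is symmetric in all components, then
`∭_{(ℝ/ℤ)³} f(u₁,u₂,u₃) = 6 ∫_{ℝ/ℤ} ∬_D f(u, u+v, u+w)`. -/
theorem domain_decomposition (f : ℝ → ℝ → ℝ → ℝ)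
    (hper₁ : ∀ u₂ u₃, Function.Periodic (fun u₁ => f u₁ u₂ u₃) 1)
    (hper₂ : ∀ u₁ u₃, Function.Periodic (fun u₂ => f u₁ u₂ u₃) 1)
    (hper₃ : ∀ u₁ u₂, Function.Periodic (fun u₃ => f u₁ u₂ u₃) 1)
    (hsymm₁₂ : ∀ u₁ u₂ u₃, f u₁ u₂ u₃ = f u₂ u₁ u₃)
    (hsymm₂₃ : ∀ u₁ u₂ u₃, f u₁ u₂ u₃ = f u₁ u₃ u₂)
    (hint : IntegrableOn (fun x : ℝ × ℝ × ℝ => f x.1 x.2.1 x.2.2)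
      (Set.Ico (0:ℝ) 1 ×ˢ Set.Ico (0:ℝ) 1 ×ˢ Set.Ico (0:ℝ) 1)) :
    ∫ x in Set.Ico (0:ℝ) 1 ×ˢ Set.Ico (0:ℝ) 1 ×ˢ Set.Ico (0:ℝ) 1,
        f x.1 x.2.1 x.2.2 =
      6 * ∫ u in Set.Ico (0:ℝ) 1, ∫ x in domainD, f u (u + x.1) (u + x.2) := by
  simpa only [nsmul_eq_mul, Nat.cast_ofNat] using
    domain_decomposition_general f hper₁ hper₂ hper₃ hsymm₁₂ hsymm₂₃ hint
end
end

section
/- Let p, q > 0 with p < (2/3)q + 1. Then there is a constant C = C(p,q) < ∞ such that for every δ ∈ (0,1]: ∭_{[−1,1]³} (δ² + u²)^{q/2} / (|v−w|^{p−q} (δ² + u² + v²)^{p/2} (δ² + u² + w²)^{p/2}) du dv dw ≤ C. (This triple integral is, up to a constant factor, the mutual generalized integral Menger curvature of the two perpendicular segments γ₁(u) = (u,0,0) and γ₂(u) = (0,u,δ), u ∈ [−1,1], showing that E_{p,q} does not penalize self-intersections for p < (2/3)q + 1.) -/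
open MeasureTheory Set
open scoped ENNReal

noncomputable section

/-!
The integrand is `h ^ q / (t ^ (p - q) * a ^ p * b ^ p)`, where `a`, `b`, `t` are the sides of the
triangle with vertices `γ₁(u)`, `γ₂(v)`, `γ₂(w)` and `h` is its height over the side `t`. Choose
`0 < α < 1` with `3 * p - 2 * q ≤ 3 * α`. Since `h ≤ min a b` and `t ≤ a + b`, the integrand is at
most a constant times `(a * b * t) ^ (-α)`: the singularity, homogeneous of degree
`2 * q - 3 * p > -3`, is distributed evenly over the three sides. Finally `|v| ≤ a`, `|u| ≤ b` and
`t = |v - w|`, and `|u| ^ (-α) * |v| ^ (-α) * |v - w| ^ (-α)` is integrable over the cube because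
`α < 1`.
-/

section Triangle

variable {a b h t L p q α β : ℝ}

lemma height_rpow_mul_base_rpow_mul_legs_rpow_le (hq : 0 ≤ q) (hβ : 0 ≤ 2 * q + 3 * β)
    (ha : 0 < a) (hb : 0 < b) (hh : 0 ≤ h) (ht : 0 ≤ t) (hha : h ≤ a) (hhb : h ≤ b)
    (htab : t ≤ a + b) (haL : a ≤ L) (hbL : b ≤ L) :
    h ^ q * t ^ (q + β) * (a * b) ^ β ≤ 2 ^ (q + β) * L ^ (2 * q + 3 * β) := by
  wlog hba : b ≤ a generalizing a b
  · rw [mul_comm a b]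
    exact this hb ha hhb hha (by linarith) hbL haL (by linarith)
  have hqβ : 0 ≤ q + β := by linarith
  calc h ^ q * t ^ (q + β) * (a * b) ^ β
      ≤ b ^ q * (2 * a) ^ (q + β) * (a * b) ^ β := by
        gcongr
        linarith
    _ = 2 ^ (q + β) * (a ^ (q + β) * a ^ β) * (b ^ q * b ^ β) := by
        rw [Real.mul_rpow zero_le_two ha.le, Real.mul_rpow ha.le hb.le]
        ring
    _ = 2 ^ (q + β) * a ^ (q + 2 * β) * b ^ (q + β) := by
        rw [← Real.rpow_add ha, ← Real.rpow_add hb]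
        ring_nf
    _ ≤ 2 ^ (q + β) * a ^ (q + 2 * β) * a ^ (q + β) := by gcongr
    _ = 2 ^ (q + β) * a ^ (2 * q + 3 * β) := by
        rw [mul_assoc, ← Real.rpow_add ha]
        ring_nf
    _ ≤ 2 ^ (q + β) * L ^ (2 * q + 3 * β) := by gcongr

lemma height_rpow_div_sides_rpow_le (hq : 0 ≤ q) (hα : 3 * p - 2 * q ≤ 3 * α)
    (ha : 0 < a) (hb : 0 < b) (hh : 0 ≤ h) (ht : 0 < t) (hha : h ≤ a) (hhb : h ≤ b)
    (htab : t ≤ a + b) (haL : a ≤ L) (hbL : b ≤ L) :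
    h ^ q / (t ^ (p - q) * a ^ p * b ^ p) ≤
      2 ^ (q + (α - p)) * L ^ (2 * q + 3 * (α - p)) * (a * b * t) ^ (-α) := by
  have hfactor : h ^ q / (t ^ (p - q) * a ^ p * b ^ p) =
      h ^ q * t ^ (q + (α - p)) * (a * b) ^ (α - p) * (a * b * t) ^ (-α) := by
    have hab : 0 < a * b := mul_pos ha hb
    rw [mul_assoc (t ^ _), ← Real.mul_rpow ha.le hb.le, Real.mul_rpow hab.le ht.le,
      div_eq_mul_inv, mul_inv, ← Real.rpow_neg ht.le, ← Real.rpow_neg hab.le,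
      show -(p - q) = q + (α - p) + -α by ring, show -p = α - p + -α by ring,
      Real.rpow_add ht, Real.rpow_add hab]
    ring
  rw [hfactor]
  exact mul_le_mul_of_nonneg_right (height_rpow_mul_base_rpow_mul_legs_rpow_le hq (by linarith)
    ha hb hh ht.le hha hhb htab haL hbL) (by positivity)

end Triangle

section Integral

open scoped Pointwise

lemma setLIntegral_enorm_rpow_neg_lt_top {E : Type*} [NormedAddCommGroup E] [NormedSpace ℝ E]
    [FiniteDimensional ℝ E] [Nontrivial E] [MeasurableSpace E] [BorelSpace E] (μ : Measure E)
    [μ.IsAddHaarMeasure] {α : ℝ} (hα : α < Module.finrank ℝ E) {s : Set E}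
    (hs : Bornology.IsBounded s) : ∫⁻ x in s, ‖x‖ₑ ^ (-α) ∂μ < ∞ := by
  have hloc : LocallyIntegrable (fun x : E ↦ ‖x‖ ^ (-α)) μ :=
    locallyIntegrable_of_norm_le_rpow Module.finrank_pos hα (C := 1)
      (.of_forall fun x ↦ by simp [abs_of_nonneg (Real.rpow_nonneg (norm_nonneg x) _)])
      (measurable_norm.pow_const _).aestronglyMeasurable
  have hne : ∀ᵐ x ∂μ.restrict s, x ≠ 0 := ae_restrict_of_ae (Measure.ae_ne μ 0)
  calc ∫⁻ x in s, ‖x‖ₑ ^ (-α) ∂μ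
      = ∫⁻ x in s, ENNReal.ofReal (‖x‖ ^ (-α)) ∂μ := lintegral_congr_ae <| by
        filter_upwards [hne] with x hx
        rw [← ofReal_norm, ENNReal.ofReal_rpow_of_pos (norm_pos_iff.2 hx)]
    _ < ∞ := ((hloc.integrableOn_isCompact hs.isCompact_closure).mono_set
        subset_closure).lintegral_lt_top

variable {G : Type*} [AddGroup G] [MeasurableSpace G] [MeasurableAdd G] [MeasurableNeg G]
  {μ : Measure G} [μ.IsAddLeftInvariant] [μ.IsNegInvariant] {s : Set G} {f g k : G → ℝ≥0∞}

lemma setLIntegral_comp_sub_left_le {v : G} (hv : v ∈ s) :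
    ∫⁻ w in s, k (v - w) ∂μ ≤ ∫⁻ x in s - s, k x ∂μ :=
  calc ∫⁻ w in s, k (v - w) ∂μ
      ≤ ∫⁻ w in (v - ·) ⁻¹' (s - s), k (v - w) ∂μ :=
        lintegral_mono_set fun _ hw ↦ sub_mem_sub hv hw
    _ = ∫⁻ x in s - s, k x ∂μ :=
        (Measure.measurePreserving_sub_left μ v).setLIntegral_comp_preimage_emb
          (measurableEmbedding_subLeft v) k (s - s)

lemma setLIntegral_mul_mul_comp_sub_le (hs : MeasurableSet s) (hf : Measurable f)
    (hg : Measurable g) (hk : Measurable k) :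
    ∫⁻ u in s, ∫⁻ v in s, ∫⁻ w in s, f u * g v * k (v - w) ∂μ ∂μ ∂μ ≤
      (∫⁻ u in s, f u ∂μ) * (∫⁻ v in s, g v ∂μ) * ∫⁻ x in s - s, k x ∂μ :=
  calc ∫⁻ u in s, ∫⁻ v in s, ∫⁻ w in s, f u * g v * k (v - w) ∂μ ∂μ ∂μ
      ≤ ∫⁻ u in s, ∫⁻ v in s, f u * g v * ∫⁻ x in s - s, k x ∂μ ∂μ ∂μ := by
        refine lintegral_mono fun u ↦ setLIntegral_mono' hs fun v hv ↦ ?_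
        rw [lintegral_const_mul _ (by fun_prop)]
        gcongr _ * ?_
        exact setLIntegral_comp_sub_left_le hv
    _ = (∫⁻ u in s, f u ∂μ) * (∫⁻ v in s, g v ∂μ) * ∫⁻ x in s - s, k x ∂μ := by
        simp_rw [lintegral_mul_const _ (hg.const_mul _), lintegral_const_mul _ hg]
        rw [lintegral_mul_const _ (by fun_prop), lintegral_mul_const _ hf]

end Integral

section PerpendicularSegments

/-- The integrand `1 / R^{p,q}(γ₁(u), γ₂(v), γ₂(w))` of the mutual generalized integral Menger
curvature of the perpendicular segments `γ₁(u) = (u, 0, 0)` and `γ₂(u) = (0, u, δ)`, in closed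
form. By the convention `x / 0 = 0` it vanishes where its denominator does. -/
def mengerIntegrand (p q δ u v w : ℝ) : ℝ :=
  (δ ^ 2 + u ^ 2) ^ (q / 2) / (|v - w| ^ (p - q) * (δ ^ 2 + u ^ 2 + v ^ 2) ^ (p / 2) *
    (δ ^ 2 + u ^ 2 + w ^ 2) ^ (p / 2))

variable {p q α δ u v w : ℝ}

lemma mengerIntegrand_le (hq : 0 ≤ q) (hα₀ : 0 ≤ α)
    (hα : 3 * p - 2 * q ≤ 3 * α) (hδ : |δ| ≤ 1) (hu : |u| ≤ 1) (hv : |v| ≤ 1) (hw : |w| ≤ 1)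
    (hu₀ : u ≠ 0) (hv₀ : v ≠ 0) (hvw : v ≠ w) :
    mengerIntegrand p q δ u v w ≤
      2 ^ (q + (α - p)) * √3 ^ (2 * q + 3 * (α - p)) * |u * v * (v - w)| ^ (-α) := by
  have hδ_sq : δ ^ 2 ≤ 1 := (sq_le_one_iff_abs_le_one δ).2 hδ
  have hu_sq : u ^ 2 ≤ 1 := (sq_le_one_iff_abs_le_one u).2 hu
  have hv_sq : v ^ 2 ≤ 1 := (sq_le_one_iff_abs_le_one v).2 hv
  have hw_sq : w ^ 2 ≤ 1 := (sq_le_one_iff_abs_le_one w).2 hw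
  have hvw_pos : 0 < |v - w| := abs_pos.2 (sub_ne_zero.2 hvw)
  set a := √(δ ^ 2 + u ^ 2 + v ^ 2)
  set b := √(δ ^ 2 + u ^ 2 + w ^ 2)
  have hva : |v| ≤ a := Real.abs_le_sqrt (by nlinarith)
  have hub : |u| ≤ b := Real.abs_le_sqrt (by nlinarith)
  have hwb : |w| ≤ b := Real.abs_le_sqrt (by nlinarith)
  have ha : 0 < a := (abs_pos.2 hv₀).trans_le hva
  have hb : 0 < b := (abs_pos.2 hu₀).trans_le hub
  rw [mengerIntegrand, Real.rpow_div_two_eq_sqrt q (by positivity),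
    Real.rpow_div_two_eq_sqrt p (by positivity), Real.rpow_div_two_eq_sqrt p (by positivity)]
  calc √(δ ^ 2 + u ^ 2) ^ q / (|v - w| ^ (p - q) * a ^ p * b ^ p)
      ≤ 2 ^ (q + (α - p)) * √3 ^ (2 * q + 3 * (α - p)) * (a * b * |v - w|) ^ (-α) :=
        height_rpow_div_sides_rpow_le hq hα ha hb (Real.sqrt_nonneg _) hvw_pos
          (Real.sqrt_le_sqrt (by nlinarith)) (Real.sqrt_le_sqrt (by nlinarith))
          ((abs_sub v w).trans (add_le_add hva hwb))
          (Real.sqrt_le_sqrt (by linarith)) (Real.sqrt_le_sqrt (by linarith))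
    _ ≤ 2 ^ (q + (α - p)) * √3 ^ (2 * q + 3 * (α - p)) * |u * v * (v - w)| ^ (-α) := by
        have hprod : |u * v * (v - w)| ≤ a * b * |v - w| := by
          rw [abs_mul, abs_mul, mul_comm |u|]
          gcongr
        have hprod_pos : 0 < |u * v * (v - w)| :=
          abs_pos.2 (mul_ne_zero (mul_ne_zero hu₀ hv₀) (sub_ne_zero.2 hvw))
        exact mul_le_mul_of_nonneg_left
          (Real.rpow_le_rpow_of_nonpos hprod_pos hprod (neg_nonpos.2 hα₀)) (by positivity)

lemma ofReal_mengerIntegrand_le (hq : 0 ≤ q) (hα₀ : 0 < α)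
    (hα : 3 * p - 2 * q ≤ 3 * α) (hδ : |δ| ≤ 1) (hu : |u| ≤ 1) (hv : |v| ≤ 1) (hw : |w| ≤ 1) :
    ENNReal.ofReal (mengerIntegrand p q δ u v w) ≤
      ENNReal.ofReal (2 ^ (q + (α - p)) * √3 ^ (2 * q + 3 * (α - p))) *
        (‖u‖ₑ ^ (-α) * ‖v‖ₑ ^ (-α) * ‖v - w‖ₑ ^ (-α)) := by
  have hconst : (0 : ℝ) < 2 ^ (q + (α - p)) * √3 ^ (2 * q + 3 * (α - p)) := by positivity
  have hprod : ‖u‖ₑ ^ (-α) * ‖v‖ₑ ^ (-α) * ‖v - w‖ₑ ^ (-α) = ‖u * v * (v - w)‖ₑ ^ (-α) := by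
    rw [enorm_mul, enorm_mul, ENNReal.mul_rpow_of_ne_top (by finiteness) (by finiteness),
      ENNReal.mul_rpow_of_ne_top (by finiteness) (by finiteness)]
  rw [hprod]
  by_cases hzero : u * v * (v - w) = 0
  · simp [hzero, ENNReal.zero_rpow_of_neg (neg_neg_of_pos hα₀),
      ENNReal.mul_top (ENNReal.ofReal_pos.2 hconst).ne']
  · rw [Real.enorm_eq_ofReal_abs, ENNReal.ofReal_rpow_of_pos (abs_pos.2 hzero),
      ← ENNReal.ofReal_mul hconst.le]
    obtain ⟨⟨hu₀, hv₀⟩, hvw⟩ : (u ≠ 0 ∧ v ≠ 0) ∧ v - w ≠ 0 := by simpa using hzero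
    exact ENNReal.ofReal_le_ofReal <| mengerIntegrand_le hq hα₀.le hα hδ hu hv hw
      hu₀ hv₀ (sub_ne_zero.1 hvw)

open scoped Pointwise in
lemma setLIntegral_mengerIntegrand_le (hq : 0 ≤ q) (hα₀ : 0 < α) (hα : 3 * p - 2 * q ≤ 3 * α)
    (hδ : |δ| ≤ 1) :
    ∫⁻ u in Icc (-1 : ℝ) 1, ∫⁻ v in Icc (-1 : ℝ) 1, ∫⁻ w in Icc (-1 : ℝ) 1,
        ENNReal.ofReal (mengerIntegrand p q δ u v w) ≤
      ENNReal.ofReal (2 ^ (q + (α - p)) * √3 ^ (2 * q + 3 * (α - p))) *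
        ((∫⁻ x in Icc (-1 : ℝ) 1, ‖x‖ₑ ^ (-α)) * (∫⁻ x in Icc (-1 : ℝ) 1, ‖x‖ₑ ^ (-α)) *
          ∫⁻ x in Icc (-1 : ℝ) 1 - Icc (-1 : ℝ) 1, ‖x‖ₑ ^ (-α)) := by
  set I : Set ℝ := Icc (-1) 1
  set c := ENNReal.ofReal (2 ^ (q + (α - p)) * √3 ^ (2 * q + 3 * (α - p)))
  calc ∫⁻ u in I, ∫⁻ v in I, ∫⁻ w in I, ENNReal.ofReal (mengerIntegrand p q δ u v w)
      ≤ ∫⁻ u in I, ∫⁻ v in I, ∫⁻ w in I,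
          c * (‖u‖ₑ ^ (-α) * ‖v‖ₑ ^ (-α) * ‖v - w‖ₑ ^ (-α)) :=
        setLIntegral_mono' measurableSet_Icc fun u hu ↦
          setLIntegral_mono' measurableSet_Icc fun v hv ↦
            setLIntegral_mono' measurableSet_Icc fun w hw ↦
              ofReal_mengerIntegrand_le hq hα₀ hα hδ (abs_le.2 hu) (abs_le.2 hv) (abs_le.2 hw)
    _ = c * ∫⁻ u in I, ∫⁻ v in I, ∫⁻ w in I, ‖u‖ₑ ^ (-α) * ‖v‖ₑ ^ (-α) * ‖v - w‖ₑ ^ (-α) := by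
        simp_rw [lintegral_const_mul' c _ ENNReal.ofReal_ne_top]
    _ ≤ c * ((∫⁻ x in I, ‖x‖ₑ ^ (-α)) * (∫⁻ x in I, ‖x‖ₑ ^ (-α)) *
          ∫⁻ x in I - I, ‖x‖ₑ ^ (-α)) := by
        gcongr
        exact setLIntegral_mul_mul_comp_sub_le measurableSet_Icc (by fun_prop) (by fun_prop)
          (by fun_prop)

end PerpendicularSegments

theorem non_repulsive_integral_bound_general (p q : ℝ) (hq : 0 ≤ q) (hpq : p < 2 / 3 * q + 1) :
    ∃ C : ℝ, 0 < C ∧ ∀ δ : ℝ, |δ| ≤ 1 →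
      (∫⁻ u in Icc (-1 : ℝ) 1, ∫⁻ v in Icc (-1 : ℝ) 1, ∫⁻ w in Icc (-1 : ℝ) 1,
          ENNReal.ofReal ((δ ^ 2 + u ^ 2) ^ (q / 2) /
            (|v - w| ^ (p - q) * (δ ^ 2 + u ^ 2 + v ^ 2) ^ (p / 2) *
              (δ ^ 2 + u ^ 2 + w ^ 2) ^ (p / 2)))) ≤
        ENNReal.ofReal C := by
  obtain ⟨α, hα, hα₁⟩ : ∃ α, max 0 (p - 2 / 3 * q) < α ∧ α < 1 :=
    exists_between (max_lt one_pos (by linarith))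
  obtain ⟨hα₀, hαpq⟩ := max_lt_iff.1 hα
  have hkernel {s : Set ℝ} (hs : Bornology.IsBounded s) : ∫⁻ x in s, ‖x‖ₑ ^ (-α) < ∞ :=
    setLIntegral_enorm_rpow_neg_lt_top volume (by simpa using hα₁) hs
  have hI : Bornology.IsBounded (Icc (-1 : ℝ) 1) := Metric.isBounded_Icc _ _
  obtain ⟨M, hM, hbound⟩ : ∃ M : ℝ≥0∞, M ≠ ∞ ∧ ∀ δ : ℝ, |δ| ≤ 1 →
      ∫⁻ u in Icc (-1 : ℝ) 1, ∫⁻ v in Icc (-1 : ℝ) 1, ∫⁻ w in Icc (-1 : ℝ) 1,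
        ENNReal.ofReal (mengerIntegrand p q δ u v w) ≤ M :=
    ⟨_, ENNReal.mul_ne_top ENNReal.ofReal_ne_top <| ENNReal.mul_ne_top
      (ENNReal.mul_ne_top (hkernel hI).ne (hkernel hI).ne) (hkernel (hI.sub hI)).ne,
      fun δ hδ ↦ setLIntegral_mengerIntegrand_le hq hα₀ (by linarith) hδ⟩
  refine ⟨M.toReal + 1, by positivity, fun δ hδ ↦ (hbound δ hδ).trans ?_⟩
  exact (ENNReal.le_ofReal_iff_toReal_le hM (by positivity)).2 (le_add_of_nonneg_right zero_le_one)

/-- **Non-repulsiveness for `p < (2/3)q + 1`.** For `p, q > 0` with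
`p < (2/3)q + 1` there is a constant `C = C(p,q) < ∞` such that for all
`δ ∈ (0,1]`
`∭_{[-1,1]³} (δ²+u²)^{q/2} / (|v-w|^{p-q} (δ²+u²+v²)^{p/2} (δ²+u²+w²)^{p/2}) ≤ C`.
This triple integral is, up to a constant, the mutual generalized integral
Menger curvature of the two perpendicular segments `u ↦ (u,0,0)` and
`u ↦ (0,u,δ)`, so `E_{p,q}` does not penalize self-intersections in this
range. -/
theorem non_repulsive_integral_bound (p q : ℝ)
    (hp0 : 0 < p) (hq0 : 0 < q) (hpq : p < 2/3 * q + 1) :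
    ∃ C : ℝ, 0 < C ∧ ∀ δ : ℝ, δ ∈ Ioc (0:ℝ) 1 →
      (∫⁻ u in Icc (-1:ℝ) 1, ∫⁻ v in Icc (-1:ℝ) 1, ∫⁻ w in Icc (-1:ℝ) 1,
          ENNReal.ofReal ((δ^2 + u^2) ^ (q/2) /
            (|v - w| ^ (p - q) * (δ^2 + u^2 + v^2) ^ (p/2) *
              (δ^2 + u^2 + w^2) ^ (p/2)))) ≤
        ENNReal.ofReal C := by
  obtain ⟨C, hC, hbound⟩ := non_repulsive_integral_bound_general p q hq0.le hpq
  exact ⟨C, hC, fun δ hδ ↦ hbound δ (abs_le.2 ⟨by linarith [hδ.1], hδ.2⟩)⟩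
end
end
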